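/- Let 'consistent' be a predicate on triples (atomic constraint, box assignment, variable) such that whether (ψ, B', v) is consistent depends only on the values of B' at the variables occurring in ψ. Suppose each atomic subconstraint of a quantified constraint φ carries a mark, which is a set of variables. Call (φ, B) correctly marked iff for every atomic subconstraint ψ of φ, for every box assignment B' obtained from B by replacing, for each variable bound by a quantifier of φ in whose scope ψ lies, its value by the corresponding quantifier bound, and for every variable v in the mark of ψ, the triple (ψ, B', v) is consistent. For a set of variables W, let notify(φ, W) be the result of replacing by the empty set the marks of all atomic subconstraints of φ that contain a variable in W. Then: if (φ, B) is correctly marked and B'' is a box assignment with B''(v) = B(v) for all v ∉ W, then (notify(φ, W), B'') is correctly marked. -/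

import Mathlib

/-!
Structural induction on the constraint, for all pairs of box assignments agreeing outside `W`.
An atomic constraint with a variable in `W` has an empty mark after `notify`; any other one
sees the same values in both box assignments, so consistency carries over by locality.
A quantifier overwrites the same component of both box assignments by the same interval,
hence preserves their agreement outside `W`.
-/

open Set

/-- A closed real interval (possibly empty or unbounded): a closed, order-connected set. -/
def IsClosedInterval (s : Set ℝ) : Prop := IsClosed s ∧ s.OrdConnected

/-- The type of closed real intervals. -/
abbrev CInterval : Type := {s : Set ℝ // IsClosedInterval s}

/-- A box assignment: a function from the variables to closed real intervals. -/
structure Box (V : Type) where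
  comp : V → CInterval

/-- The set of variable assignments represented by a box assignment. -/
def Box.pts {V : Type} (B : Box V) : Set (V → ℝ) := {d | ∀ v, d v ∈ (B.comp v).1}

/-- `B.upd x I` is the box assignment equal to `B` except that it assigns `I` to `x`. -/
def Box.upd {V : Type} [DecidableEq V] (B : Box V) (x : V) (I : CInterval) : Box V :=
  ⟨Function.update B.comp x I⟩

/-- The four inequality relations allowed in atomic constraints. -/
inductive ARel : Type where
  | le | lt | ge | gt

/-- An atomic constraint `f rel g`, together with the set of variables occurring in it. -/
structure Atom (V : Type) where
  rel : ARel
  lhs : (V → ℝ) → ℝ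
  rhs : (V → ℝ) → ℝ
  vars : Set V

/-- Quantified constraints whose atomic subconstraints carry a mark (a set of variables). -/
inductive MQC (V : Type) : Type where
  | atom (a : Atom V) (mark : Set V)
  | conj (φ₁ φ₂ : MQC V)
  | disj (φ₁ φ₂ : MQC V)
  | exQ (x : V) (I : CInterval) (φ : MQC V)
  | allQ (x : V) (I : CInterval) (φ : MQC V)

/-- `(φ, B)` is correctly marked w.r.t. the consistency predicate `cons`:
for every atomic subconstraint `ψ`, for the box assignment obtained from `B` by
replacing, for each variable bound by a quantifier of `φ` in whose scope `ψ` lies,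
its value by the corresponding quantifier bound, and for every variable `v` in the
mark of `ψ`, the triple `(ψ, ·, v)` is consistent. -/
def CorrectlyMarked {V : Type} [DecidableEq V] (cons : Atom V → Box V → V → Prop) :
    MQC V → Box V → Prop
  | .atom a m, B => ∀ v ∈ m, cons a B v
  | .conj φ₁ φ₂, B => CorrectlyMarked cons φ₁ B ∧ CorrectlyMarked cons φ₂ B
  | .disj φ₁ φ₂, B => CorrectlyMarked cons φ₁ B ∧ CorrectlyMarked cons φ₂ B
  | .exQ x I φ, B => CorrectlyMarked cons φ (B.upd x I)
  | .allQ x I φ, B => CorrectlyMarked cons φ (B.upd x I)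

open scoped Classical in
/-- `notify φ W`: replace by the empty set the marks of all atomic subconstraints of `φ`
that contain a variable in `W`. -/
noncomputable def MQC.notify {V : Type} (W : Set V) : MQC V → MQC V
  | .atom a m => .atom a (if (a.vars ∩ W).Nonempty then ∅ else m)
  | .conj φ₁ φ₂ => .conj (φ₁.notify W) (φ₂.notify W)
  | .disj φ₁ φ₂ => .disj (φ₁.notify W) (φ₂.notify W)
  | .exQ x I φ => .exQ x I (φ.notify W)
  | .allQ x I φ => .allQ x I (φ.notify W)

/-- if consistency of `(ψ, B', v)` depends only on the values of `B'` at
the variables occurring in `ψ`, `(φ, B)` is correctly marked, and `B''` agrees with `B`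
outside `W`, then `(notify φ W, B'')` is correctly marked. -/
theorem notify_correctlyMarked {V : Type} [DecidableEq V]
    (cons : Atom V → Box V → V → Prop)
    (hdep : ∀ (a : Atom V) (B B' : Box V) (v : V),
      (∀ u ∈ a.vars, B.comp u = B'.comp u) → (cons a B v ↔ cons a B' v))
    (φ : MQC V) (B B'' : Box V) (W : Set V)
    (hB'' : ∀ v ∉ W, B''.comp v = B.comp v)
    (h : CorrectlyMarked cons φ B) :
    CorrectlyMarked cons (φ.notify W) B'' := by
  induction φ generalizing B B'' with
  | atom a m =>
    intro v hv
    -- A nonempty new mark means that `a` has no variable in `W`, so `B` and `B''` agree on `a.vars`.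
    split_ifs at hv with hW
    · exact hv.elim
    · exact (hdep a B'' B v fun u hu => hB'' u fun huW => hW ⟨u, hu, huW⟩).2 (h v hv)
  | conj φ₁ φ₂ ih₁ ih₂ => exact ⟨ih₁ B B'' hB'' h.1, ih₂ B B'' hB'' h.2⟩
  | disj φ₁ φ₂ ih₁ ih₂ => exact ⟨ih₁ B B'' hB'' h.1, ih₂ B B'' hB'' h.2⟩
  | exQ x I φ ih | allQ x I φ ih =>
    -- Setting the same variable to the same interval preserves agreement outside `W`.
    refine ih (B.upd x I) (B''.upd x I) (fun v hv => ?_) h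
    simp only [Box.upd, Function.update_apply, hB'' v hv]
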